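/- arXiv:2510.25341 — 4 statements merged into one kernel-verified Lean document; each statement's English description precedes it below -/
import Mathlib

section
/- A ring R is a √J-clean ring if and only if the quotient ring R/J(R) is a √J-clean ring and idempotents lift modulo J(R) (i.e., for every x ∈ R with x² − x ∈ J(R) there exists an idempotent e ∈ R with x − e ∈ J(R)). -/
/-- `√J(R)`: the set of elements some positive power of which lies in the
Jacobson radical `J(R)` of the ring `R`. -/
def sqrtJ (R : Type*) [Ring R] : Set R :=
  {z : R | ∃ n : ℕ, 1 ≤ n ∧ z ^ n ∈ (⊥ : TwoSidedIdeal R).jacobson}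

/-- `R` is a `√J`-clean ring: every element is the sum of an idempotent and an
element of `√J(R)`. -/
def IsSqrtJCleanRing (R : Type*) [Ring R] : Prop :=
  ∀ a : R, ∃ e z : R, IsIdempotentElem e ∧ z ∈ sqrtJ R ∧ a = e + z

/-- `R` is a strongly `√J`-clean ring: every element is the sum of an idempotent
and an element of `√J(R)` that commute with each other. -/
def IsStronglySqrtJCleanRing (R : Type*) [Ring R] : Prop :=
  ∀ a : R, ∃ e z : R, IsIdempotentElem e ∧ z ∈ sqrtJ R ∧ a = e + z ∧ e * z = z * e

/-- `R` is a uniquely `√J`-clean ring: every element is uniquely the sum of an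
idempotent and an element of `√J(R)`. -/
def IsUniquelySqrtJCleanRing (R : Type*) [Ring R] : Prop :=
  ∀ a : R, ∃! p : R × R, IsIdempotentElem p.1 ∧ p.2 ∈ sqrtJ R ∧ a = p.1 + p.2

/-- `R` is a uniquely clean ring: every element is uniquely the sum of an
idempotent and a unit. -/
def IsUniquelyCleanRing (R : Type*) [Ring R] : Prop :=
  ∀ a : R, ∃! p : R × R, IsIdempotentElem p.1 ∧ IsUnit p.2 ∧ a = p.1 + p.2

/-!
If `z ∈ √J(R)`, then `1 - z` divides the unit `1 - z ^ n` by a geometric sum that commutes with it,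
so `1 - z` is a unit. Writing `x + 1 = e + z` thus exhibits `x = e + (z - 1)` as an idempotent plus
a unit `u`, and then the idempotent `f = u⁻¹ (1 - e) u` satisfies `x - f = u⁻¹ (x ^ 2 - x)`: it
approximates `x` modulo every left ideal containing `x ^ 2 - x`. Conversely, along a surjection
whose kernel lies in `J(R)`, membership in `√J` can be tested on images, so a decomposition of the
image of `a` pulls back to one of `a` as soon as its idempotent lifts.
-/

section Unit

variable {R : Type*} [Ring R] {x z : R}

theorem isUnit_of_one_sub_mem_jacobson_bot (hx : 1 - x ∈ (⊥ : Ideal R).jacobson) : IsUnit x := by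
  have exists_left_inverse {y : R} (hy : 1 - y ∈ (⊥ : Ideal R).jacobson) : ∃ s, s * y = 1 := by
    obtain ⟨s, hs⟩ := Ideal.exists_mul_sub_mem_of_sub_one_mem_jacobson y (sub_mem_comm_iff.1 hy)
    exact ⟨s, sub_eq_zero.1 (Ideal.mem_bot.1 hs)⟩
  obtain ⟨s, hsx⟩ := exists_left_inverse hx
  have hs : 1 - s ∈ (⊥ : Ideal R).jacobson := by
    have h : s * (1 - x) = -(1 - s) := by rw [mul_sub, hsx, mul_one, neg_sub]
    exact neg_mem_iff.1 (h ▸ Ideal.mul_mem_left _ s hx)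
  obtain ⟨t, hts⟩ := exists_left_inverse hs
  have htx : t = x := left_inv_eq_right_inv hts hsx
  exact isUnit_iff_exists.2 ⟨s, htx ▸ hts, hsx⟩

theorem isUnit_one_sub_of_isUnit_one_sub_pow {n : ℕ} (h : IsUnit (1 - x ^ n)) :
    IsUnit (1 - x) := by
  have hcomm : Commute (1 - x) (∑ i ∈ Finset.range n, x ^ i) :=
    (mul_neg_geom_sum x n).trans (geom_sum_mul_neg x n).symm
  rw [← mul_neg_geom_sum, hcomm.isUnit_mul_iff] at h
  exact h.1

theorem mem_twoSided_jacobson_bot_iff :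
    x ∈ (⊥ : TwoSidedIdeal R).jacobson ↔ x ∈ (⊥ : Ideal R).jacobson := by
  rw [← TwoSidedIdeal.mem_asIdeal, TwoSidedIdeal.asIdeal_jacobson, TwoSidedIdeal.bot_asIdeal]

theorem isUnit_one_sub_of_mem_sqrtJ (hz : z ∈ sqrtJ R) : IsUnit (1 - z) := by
  obtain ⟨n, -, hzn⟩ := hz
  refine isUnit_one_sub_of_isUnit_one_sub_pow (n := n) (isUnit_of_one_sub_mem_jacobson_bot ?_)
  rwa [sub_sub_cancel, ← mem_twoSided_jacobson_bot_iff]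

end Unit

section Clean

/-- `R` is a clean ring: every element is the sum of an idempotent and a unit. This
property, weaker than `√J`-cleanness, already makes idempotents lift modulo every left ideal. -/
def IsCleanRing (R : Type*) [Ring R] : Prop :=
  ∀ a : R, ∃ e u : R, IsIdempotentElem e ∧ IsUnit u ∧ a = e + u

variable {R : Type*} [Ring R]

theorem IsSqrtJCleanRing.isCleanRing (h : IsSqrtJCleanRing R) : IsCleanRing R := fun a ↦ by
  obtain ⟨e, z, he, hz, haz⟩ := h (a + 1)
  exact ⟨e, z - 1, he, IsUnit.sub_iff.1 (isUnit_one_sub_of_mem_sqrtJ hz),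
    by rw [← add_sub_assoc, ← haz, add_sub_cancel_right]⟩

theorem isIdempotentElem_units_conj {M : Type*} [Monoid M] {e : M} (he : IsIdempotentElem e)
    (u : Mˣ) : IsIdempotentElem (↑u⁻¹ * e * u) := by
  simp only [IsIdempotentElem, mul_assoc, Units.mul_inv_cancel_left, he.mul_self_mul]

theorem add_unit_sub_conj_one_sub {e : R} (he : IsIdempotentElem e) (u : Rˣ) :
    (e + u) - ↑u⁻¹ * (1 - e) * u = ↑u⁻¹ * ((e + u) ^ 2 - (e + u)) := by
  rw [Units.eq_inv_mul_iff_mul_eq, mul_sub, mul_assoc, Units.mul_inv_cancel_left, sq, add_mul,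
    mul_add e, he.eq]
  noncomm_ring

theorem IsCleanRing.exists_isIdempotentElem_sub_mem (h : IsCleanRing R) (I : Ideal R) {x : R}
    (hx : x ^ 2 - x ∈ I) : ∃ e : R, IsIdempotentElem e ∧ x - e ∈ I := by
  obtain ⟨e, _, he, ⟨u, rfl⟩, rfl⟩ := h x
  refine ⟨↑u⁻¹ * (1 - e) * u, isIdempotentElem_units_conj he.one_sub u, ?_⟩
  rw [add_unit_sub_conj_one_sub he]
  exact I.mul_mem_left _ hx

end Clean

section Surjective

variable {R S : Type*} [Ring R] [Ring S] {f : R →+* S}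

theorem map_mem_jacobson_bot_iff (hf : Function.Surjective f) {x : R} :
    f x ∈ (⊥ : TwoSidedIdeal S).jacobson ↔ x ∈ (RingHom.ker f).jacobson := by
  rw [mem_twoSided_jacobson_bot_iff, ← Ideal.mem_comap,
    Ideal.comap_jacobson_of_surjective hf, RingHom.ker_eq_comap_bot]

theorem map_mem_sqrtJ (hf : Function.Surjective f) {z : R} (hz : z ∈ sqrtJ R) : f z ∈ sqrtJ S := by
  obtain ⟨n, hn, hzn⟩ := hz
  refine ⟨n, hn, ?_⟩
  rw [← map_pow, map_mem_jacobson_bot_iff hf]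
  exact Ideal.jacobson_mono bot_le (mem_twoSided_jacobson_bot_iff.1 hzn)

theorem mem_sqrtJ_of_map_mem_sqrtJ (hf : Function.Surjective f)
    (hker : RingHom.ker f ≤ (⊥ : Ideal R).jacobson) {z : R} (hz : f z ∈ sqrtJ S) :
    z ∈ sqrtJ R := by
  obtain ⟨n, hn, hzn⟩ := hz
  refine ⟨n, hn, ?_⟩
  rw [← map_pow, map_mem_jacobson_bot_iff hf] at hzn
  rw [mem_twoSided_jacobson_bot_iff, ← Ideal.jacobson_idem]
  exact Ideal.jacobson_mono hker hzn

theorem IsSqrtJCleanRing.of_surjective (hf : Function.Surjective f) (h : IsSqrtJCleanRing R) :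
    IsSqrtJCleanRing S := fun b ↦ by
  obtain ⟨a, rfl⟩ := hf b
  obtain ⟨e, z, he, hz, rfl⟩ := h a
  exact ⟨f e, f z, he.map f, map_mem_sqrtJ hf hz, map_add f e z⟩

theorem IsSqrtJCleanRing.of_ker_le_jacobson_bot (hf : Function.Surjective f)
    (hker : RingHom.ker f ≤ (⊥ : Ideal R).jacobson) (h : IsSqrtJCleanRing S)
    (hlift : ∀ x : R, x ^ 2 - x ∈ RingHom.ker f →
      ∃ e : R, IsIdempotentElem e ∧ x - e ∈ RingHom.ker f) :
    IsSqrtJCleanRing R := fun a ↦ by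
  obtain ⟨e', z, he', hz, haz⟩ := h (f a)
  obtain ⟨x, rfl⟩ := hf e'
  obtain ⟨e, he, hxe⟩ := hlift x <| by
    rw [RingHom.mem_ker, map_sub, map_pow, sq, he'.eq, sub_self]
  have hfe : f x = f e := (RingHom.sub_mem_ker_iff f).1 hxe
  have hfae : f (a - e) = z := by rw [map_sub, haz, hfe, add_sub_cancel_left]
  exact ⟨e, a - e, he, mem_sqrtJ_of_map_mem_sqrtJ hf hker (hfae ▸ hz), (add_sub_cancel e a).symm⟩

theorem isSqrtJCleanRing_iff_of_ker_le_jacobson_bot (hf : Function.Surjective f)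
    (hker : RingHom.ker f ≤ (⊥ : Ideal R).jacobson) :
    IsSqrtJCleanRing R ↔ IsSqrtJCleanRing S ∧ ∀ x : R, x ^ 2 - x ∈ RingHom.ker f →
      ∃ e : R, IsIdempotentElem e ∧ x - e ∈ RingHom.ker f :=
  ⟨fun h ↦ ⟨h.of_surjective hf, fun _ ↦ h.isCleanRing.exists_isIdempotentElem_sub_mem _⟩,
    fun ⟨h, hlift⟩ ↦ h.of_ker_le_jacobson_bot hf hker hlift⟩

end Surjective

theorem mem_ker_ringCon_mk' {R : Type*} [Ring R] (I : TwoSidedIdeal R) {x : R} :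
    x ∈ RingHom.ker I.ringCon.mk' ↔ x ∈ I := by
  rw [RingHom.mem_ker, ← TwoSidedIdeal.mem_ker, TwoSidedIdeal.ker_ringCon_mk']

theorem isSqrtJCleanRing_iff_quotient_general {R : Type*} [Ring R] {I : TwoSidedIdeal R}
    (hI : I ≤ (⊥ : TwoSidedIdeal R).jacobson) :
    IsSqrtJCleanRing R ↔ IsSqrtJCleanRing I.ringCon.Quotient ∧
      ∀ x : R, x ^ 2 - x ∈ I → ∃ e : R, IsIdempotentElem e ∧ x - e ∈ I := by
  have hker : RingHom.ker I.ringCon.mk' ≤ (⊥ : Ideal R).jacobson := fun _ hx ↦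
    mem_twoSided_jacobson_bot_iff.1 (hI ((mem_ker_ringCon_mk' I).1 hx))
  simpa only [mem_ker_ringCon_mk'] using
    isSqrtJCleanRing_iff_of_ker_le_jacobson_bot I.ringCon.mk'_surjective hker

theorem isSqrtJCleanRing_iff_quotient (R : Type*) [Ring R] :
    IsSqrtJCleanRing R ↔
      (IsSqrtJCleanRing ((⊥ : TwoSidedIdeal R).jacobson.ringCon.Quotient) ∧
        ∀ x : R, x ^ 2 - x ∈ (⊥ : TwoSidedIdeal R).jacobson →
          ∃ e : R, IsIdempotentElem e ∧ x - e ∈ (⊥ : TwoSidedIdeal R).jacobson) :=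
  isSqrtJCleanRing_iff_quotient_general le_rfl
end

section
/- Every strongly √J-clean ring is a √JU ring; that is, if R is strongly √J-clean, then every unit of R lies in 1 + √J(R). -/
/-!
Let `u = e + z` with `e` an idempotent commuting with `z` and `z ^ n ∈ J(R)`. Multiplying by the
complementary idempotent kills the `e`-part of every power: `(1 - e) * u ^ n = (1 - e) * z ^ n`. If
`u` is invertible, this puts `1 - e` itself into `J(R)`. The only idempotent of `J(R)` is `0`,
so `e = 1`.
-/

theorem mul_pow_eq_mul_pow_of_commute {M : Type*} [Monoid M] {a b c : M} (h : a * b = a * c)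
    (hbc : Commute b c) (n : ℕ) : a * b ^ n = a * c ^ n := by
  induction n with
  | zero => rw [pow_zero, pow_zero]
  | succ n ih =>
    calc a * b ^ (n + 1) = a * b ^ n * b := by rw [pow_succ, mul_assoc]
      _ = a * (c ^ n * b) := by rw [ih, mul_assoc]
      _ = a * b * c ^ n := by rw [← (hbc.pow_right n).eq, mul_assoc]
      _ = a * c ^ (n + 1) := by rw [h, mul_assoc, ← pow_succ']

theorem one_sub_mul_add_pow {R : Type*} [Ring R] {e z : R} (he : IsIdempotentElem e)
    (hez : Commute e z) (n : ℕ) : (1 - e) * (e + z) ^ n = (1 - e) * z ^ n := by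
  refine mul_pow_eq_mul_pow_of_commute ?_ (hez.add_left (Commute.refl z)) n
  rw [mul_add, he.one_sub_mul_self, zero_add]

theorem mem_of_isIdempotentElem_of_mem_jacobson {R : Type*} [Ring R] {I : TwoSidedIdeal R} {e : R}
    (he : IsIdempotentElem e) (heI : e ∈ I.jacobson) : e ∈ I := by
  obtain ⟨y, hy⟩ : ∃ y, y * -1 * e + y - 1 ∈ I := TwoSidedIdeal.mem_jacobson_iff.mp heI (-1)
  have neg_mul_eq : -((y * -1 * e + y - 1) * e) = e :=
    calc -((y * -1 * e + y - 1) * e) = y * (e * e) - y * e + e := by noncomm_ring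
      _ = e := by rw [he.eq, sub_self, zero_add]
  exact neg_mul_eq ▸ I.neg_mem (I.mul_mem_right _ _ hy)

theorem one_sub_mem_of_pow_mem_jacobson {R : Type*} [Ring R] {I : TwoSidedIdeal R} {e z v : R}
    {n : ℕ} (he : IsIdempotentElem e) (hez : Commute e z) (hv : (e + z) * v = 1)
    (hz : z ^ n ∈ I.jacobson) : 1 - e ∈ I := by
  refine mem_of_isIdempotentElem_of_mem_jacobson he.one_sub ?_
  have one_sub_eq : (1 - e) * z ^ n * v ^ n = 1 - e := by
    rw [← one_sub_mul_add_pow he hez, mul_assoc, pow_mul_pow_eq_one n hv, mul_one]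
  exact one_sub_eq ▸ I.jacobson.mul_mem_right _ _ (I.jacobson.mul_mem_left _ _ hz)

theorem sqrtJU_of_stronglySqrtJClean_general {R : Type*} [Ring R] {u v : R} (huv : u * v = 1)
    (h : ∃ e z : R, IsIdempotentElem e ∧ z ∈ sqrtJ R ∧ u = e + z ∧ e * z = z * e) :
    ∃ z ∈ sqrtJ R, u = 1 + z := by
  obtain ⟨e, z, he, hz, rfl, hez⟩ := h
  have ⟨_, _, hzn⟩ := hz
  have one_sub_eq_zero : 1 - e = 0 :=
    (TwoSidedIdeal.mem_bot R).mp (one_sub_mem_of_pow_mem_jacobson he hez huv hzn)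
  exact ⟨z, hz, by rw [← sub_eq_zero.mp one_sub_eq_zero]⟩

theorem sqrtJU_of_stronglySqrtJClean (R : Type*) [Ring R]
    (h : IsStronglySqrtJCleanRing R) :
    ∀ u : R, IsUnit u → ∃ z ∈ sqrtJ R, u = 1 + z := by
  rintro u ⟨v, rfl⟩
  exact sqrtJU_of_stronglySqrtJClean_general v.mul_inv (h v)
end

section
/- Every strongly √J-clean ring is a strongly clean ring; that is, if R is strongly √J-clean, then every element of R can be written as e + u with e idempotent, u a unit, and eu = ue. -/
/-!
Modulo the Jacobson radical the elements of `√J(R)` are nilpotent, and units lift along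
`R → R/J(R)`; hence a unit plus a commuting element of `√J(R)` is again a unit. If `a = e + z` with
`e` idempotent, then `a = (1 - e) + ((2e - 1) + z)`, and `2e - 1` is its own inverse.
-/

section Jacobson

variable {R : Type*} [Ring R]

theorem exists_mul_eq_one_of_sub_one_mem_ringJacobson {r : R} (hr : r - 1 ∈ Ring.jacobson R) :
    ∃ s, s * r = 1 := by
  rw [← Ideal.jacobson_bot] at hr
  simpa only [Ideal.mem_bot, sub_eq_zero] using
    Ideal.exists_mul_sub_mem_of_sub_one_mem_jacobson r hr

theorem isUnit_of_sub_one_mem_ringJacobson {r : R} (hr : r - 1 ∈ Ring.jacobson R) : IsUnit r := by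
  obtain ⟨s, hsr⟩ := exists_mul_eq_one_of_sub_one_mem_ringJacobson hr
  -- The left inverse `s` is itself congruent to `1`, so it has a left inverse too.
  have hs : s - 1 ∈ Ring.jacobson R := by
    have hs_eq : s - 1 = -s * (r - 1) := by
      rw [mul_sub, neg_mul, hsr, mul_one]
      abel
    exact hs_eq ▸ Ideal.mul_mem_left _ _ hr
  obtain ⟨t, hts⟩ := exists_mul_eq_one_of_sub_one_mem_ringJacobson hs
  have htr : t = r := left_inv_eq_right_inv hts hsr
  exact isUnit_iff_exists.mpr ⟨s, htr ▸ hts, hsr⟩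

theorem isLocalHom_of_surjective_of_ker_le_ringJacobson {S : Type*} [Ring S] {f : R →+* S}
    (hf : Function.Surjective f) (hker : RingHom.ker f ≤ Ring.jacobson R) : IsLocalHom f where
  map_nonunit a ha := by
    have isUnit_of_map_eq_one {x : R} (hx : f x = 1) : IsUnit x :=
      isUnit_of_sub_one_mem_ringJacobson <| hker <| by
        rw [RingHom.mem_ker, map_sub, hx, map_one, sub_self]
    obtain ⟨c, hac, hca⟩ := isUnit_iff_exists.mp ha
    obtain ⟨b, rfl⟩ := hf c
    obtain ⟨x, hx⟩ := (isUnit_of_map_eq_one (x := a * b) (by rwa [map_mul])).exists_right_inv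
    obtain ⟨y, hy⟩ := (isUnit_of_map_eq_one (x := b * a) (by rwa [map_mul])).exists_left_inv
    exact isUnit_iff_exists_and_exists.mpr
      ⟨⟨b * x, by rwa [← mul_assoc]⟩, ⟨y * b, by rwa [mul_assoc]⟩⟩

theorem mem_sqrtJ_iff_isNilpotent_mk {z : R} :
    z ∈ sqrtJ R ↔ IsNilpotent (Ideal.Quotient.mk (Ring.jacobson R) z) := by
  have mk_pow_eq_zero_iff (n : ℕ) : Ideal.Quotient.mk (Ring.jacobson R) z ^ n = 0 ↔
      z ^ n ∈ (⊥ : TwoSidedIdeal R).jacobson := by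
    rw [← map_pow, Ideal.Quotient.eq_zero_iff_mem, ← TwoSidedIdeal.mem_asIdeal,
      TwoSidedIdeal.asIdeal_jacobson, TwoSidedIdeal.bot_asIdeal, Ideal.jacobson_bot]
  constructor
  · rintro ⟨n, -, hn⟩
    exact ⟨n, (mk_pow_eq_zero_iff n).mpr hn⟩
  · rintro ⟨n, hn⟩
    exact ⟨n + 1, n.succ_pos, (mk_pow_eq_zero_iff _).mp (pow_eq_zero_of_le n.le_succ hn)⟩

theorem isUnit_add_of_mem_sqrtJ_of_commute {u z : R} (hu : IsUnit u) (hz : z ∈ sqrtJ R)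
    (huz : Commute u z) : IsUnit (u + z) := by
  let π := Ideal.Quotient.mk (Ring.jacobson R)
  have : IsLocalHom π :=
    isLocalHom_of_surjective_of_ker_le_ringJacobson Ideal.Quotient.mk_surjective Ideal.mk_ker.le
  have hπ : IsUnit (π u + π z) :=
    (mem_sqrtJ_iff_isNilpotent_mk.mp hz).isUnit_add_left_of_commute (hu.map π) (huz.symm.map π)
  exact IsUnit.of_map π (u + z) (by rwa [map_add])

end Jacobson

theorem isUnit_two_mul_sub_one_of_isIdempotentElem {R : Type*} [Ring R] {e : R}
    (he : IsIdempotentElem e) : IsUnit (2 * e - 1) := by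
  have h_sq : (2 * e - 1) * (2 * e - 1) = 1 := by
    simp only [two_mul, mul_sub, sub_mul, mul_add, add_mul, he.eq, one_mul, mul_one]
    abel
  exact isUnit_iff_exists.mpr ⟨2 * e - 1, h_sq, h_sq⟩

theorem stronglyClean_of_stronglySqrtJClean_general {R : Type*} [Ring R] {a : R}
    (ha : ∃ e z : R, IsIdempotentElem e ∧ z ∈ sqrtJ R ∧ a = e + z ∧ e * z = z * e) :
    ∃ e u : R, IsIdempotentElem e ∧ IsUnit u ∧ a = e + u ∧ e * u = u * e := by
  obtain ⟨e, z, he, hz, rfl, hez⟩ := ha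
  have h_comm_e : Commute (2 * e - 1) e :=
    ((Commute.ofNat_left 2 e).mul_left (Commute.refl e)).sub_left (Commute.one_left e)
  have h_comm_z : Commute (2 * e - 1) z :=
    ((Commute.ofNat_left 2 z).mul_left hez).sub_left (Commute.one_left z)
  have h_unit : IsUnit (2 * e - 1 + z) :=
    isUnit_add_of_mem_sqrtJ_of_commute (isUnit_two_mul_sub_one_of_isIdempotentElem he) hz h_comm_z
  have h_comm : Commute (1 - e) (2 * e - 1 + z) :=
    (Commute.one_left _).sub_left (h_comm_e.symm.add_right hez)
  refine ⟨1 - e, 2 * e - 1 + z, he.one_sub, h_unit, ?_, h_comm.eq⟩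
  rw [two_mul]
  abel

theorem stronglyClean_of_stronglySqrtJClean (R : Type*) [Ring R]
    (h : IsStronglySqrtJCleanRing R) :
    ∀ a : R, ∃ e u : R, IsIdempotentElem e ∧ IsUnit u ∧ a = e + u ∧ e * u = u * e :=
  fun a ↦ stronglyClean_of_stronglySqrtJClean_general (h a)
end

section
/- If R is a strongly √J-clean ring, then for every element r ∈ R one has r² − r ∈ √J(R). -/
section

variable {R : Type*} [Ring R]

theorem mul_mem_sqrtJ_of_commute {z w : R} (hz : z ∈ sqrtJ R) (hzw : Commute z w) :
    z * w ∈ sqrtJ R := by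
  obtain ⟨n, hn, hzn⟩ := hz
  refine ⟨n, hn, ?_⟩
  rw [hzw.mul_pow]
  exact TwoSidedIdeal.mul_mem_right _ _ _ hzn

theorem add_sq_sub_add_eq_mul_of_isIdempotentElem {e z : R} (he : IsIdempotentElem e)
    (hez : Commute e z) : (e + z) ^ 2 - (e + z) = z * (2 * e + z - 1) :=
  calc
    (e + z) ^ 2 - (e + z) = e ^ 2 + 2 * (e * z) + z ^ 2 - (e + z) := by
      rw [hez.add_sq, mul_assoc]
    _ = e + 2 * (z * e) + z ^ 2 - (e + z) := by rw [he.pow_eq two_ne_zero, hez.eq]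
    _ = z * (2 * e + z - 1) := by noncomm_ring

theorem sq_sub_self_mem_sqrtJ_general {e z : R} (he : IsIdempotentElem e) (hz : z ∈ sqrtJ R)
    (hez : Commute e z) : (e + z) ^ 2 - (e + z) ∈ sqrtJ R := by
  have hcomm : Commute z (2 * e + z - 1) :=
    (((Commute.ofNat_right z 2).mul_right hez.symm).add_right (Commute.refl z)).sub_right
      (Commute.one_right z)
  rw [add_sq_sub_add_eq_mul_of_isIdempotentElem he hez]
  exact mul_mem_sqrtJ_of_commute hz hcomm

end

theorem sq_sub_self_mem_sqrtJ (R : Type*) [Ring R]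
    (h : IsStronglySqrtJCleanRing R) (r : R) : r ^ 2 - r ∈ sqrtJ R := by
  obtain ⟨e, z, he, hz, rfl, hez⟩ := h r
  exact sq_sub_self_mem_sqrtJ_general he hz hez
end
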